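/- arXiv:math/0505153 — 5 statements merged into one kernel-verified Lean document; each statement's English description precedes it below -/
import Mathlib

section
/- Let (X, 𝒳) be a measurable space and g : X → [0, ∞) a measurable function. For a probability measure ρ on X write p(ρ) = ∫_X g dρ, and when 0 < p(ρ) < ∞ let φ(ρ) denote the probability measure with density g / p(ρ) with respect to ρ. Let Θ be a nonempty set, let (ν^i_θ)_{i ∈ ℕ, θ ∈ Θ} be a family of probability measures on X, let T : Θ → Θ be a map and t : ℕ → ℕ a bijection such that for all i ∈ ℕ and θ ∈ Θ one has 0 < p(ν^i_θ) < ∞ and φ(ν^i_θ) = ν^{t(i)}_{T(θ)}. Then for every θ ∈ Θ and every sequence α = (α_i)_{i ∈ ℕ} of nonnegative reals with Σ_i α_i = 1, the mixture ν = Σ_i α_i ν^i_θ satisfies: if p(ν) = Σ_i α_i p(ν^i_θ) < ∞ then φ(ν) = Σ_j a_j ν^j_{T(θ)}, where a_j = α_{t^{-1}(j)} · p(ν^{t^{-1}(j)}_θ) / p(ν); in particular (a_j) is a sequence of nonnegative reals summing to 1. -/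
open MeasureTheory ENNReal

/-!
Write `p(ρ) = ∫ g dρ` and let `g · ρ` be the measure with density `g`. Since `p(ρ) • φ(ρ) = g · ρ`,
the operator `φ` becomes linear once its normalization is undone, so `g · ∑ᵢ αᵢ μᵢ` is
`∑ᵢ αᵢ p(μᵢ) φ(μᵢ)`. Dividing by the total mass `p(∑ᵢ αᵢ μᵢ)` turns the coefficients into weights of
sum `1`, and reindexing along `t` gives the claim.
-/

section

variable {X ι κ : Type*} [MeasurableSpace X]

/-- The mixture `∑ᵢ αᵢ μᵢ`. The weights are not required to sum to `1`. -/
noncomputable def mixture (α : ι → ℝ≥0∞) (μ : ι → Measure X) : Measure X :=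
  Measure.sum fun i => α i • μ i

/-- The updating operator `φ` of nonlinear filtering with likelihood `g`. It is meaningful when
`0 < ∫ g dρ < ∞`; an infinite integral gives the zero measure, as `g x / ∞ = 0`. -/
noncomputable def updatingOperator (g : X → ℝ≥0∞) (ρ : Measure X) : Measure X :=
  ρ.withDensity fun x => g x / ∫⁻ x, g x ∂ρ

/-- The weight `αᵢ p(μᵢ) / p(∑ₖ αₖ μₖ)` of the `i`-th component after a mixture has been updated
with likelihood `g`, where `p(ρ) = ∫ g dρ`. -/
noncomputable def updatedWeight
    (g : X → ℝ≥0∞) (α : ι → ℝ≥0∞) (μ : ι → Measure X) (i : ι) : ℝ≥0∞ :=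
  α i * (∫⁻ x, g x ∂(μ i)) / ∫⁻ x, g x ∂(mixture α μ)

theorem lintegral_mixture (g : X → ℝ≥0∞) (α : ι → ℝ≥0∞) (μ : ι → Measure X) :
    ∫⁻ x, g x ∂(mixture α μ) = ∑' i, α i * ∫⁻ x, g x ∂(μ i) := by
  simp [mixture, lintegral_sum_measure]

theorem lintegral_mixture_ne_zero {g : X → ℝ≥0∞} {α : ι → ℝ≥0∞} {μ : ι → Measure X}
    (hα : α ≠ 0) (hpos : ∀ i, ∫⁻ x, g x ∂(μ i) ≠ 0) :
    ∫⁻ x, g x ∂(mixture α μ) ≠ 0 := by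
  obtain ⟨i, hi⟩ := Function.ne_iff.mp hα
  rw [lintegral_mixture, Ne, ENNReal.tsum_eq_zero]
  exact fun h => mul_ne_zero hi (hpos i) (h i)

theorem withDensity_mixture (g : X → ℝ≥0∞) (α : ι → ℝ≥0∞) (μ : ι → Measure X) :
    (mixture α μ).withDensity g = mixture α fun i => (μ i).withDensity g := by
  simp only [mixture, withDensity_sum, withDensity_smul_measure]

theorem smul_mixture (c : ℝ≥0∞) (α : ι → ℝ≥0∞) (μ : ι → Measure X) :
    c • mixture α μ = mixture (c • α) μ := by
  ext s hs
  simp [mixture, hs, mul_assoc, ENNReal.tsum_mul_left]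

theorem mixture_smul (c α : ι → ℝ≥0∞) (μ : ι → Measure X) :
    mixture α (fun i => c i • μ i) = mixture (α * c) μ := by
  simp only [mixture, smul_smul, Pi.mul_apply]

theorem mixture_comp_equiv (t : ι ≃ κ) (α : κ → ℝ≥0∞) (μ : κ → Measure X) :
    mixture (α ∘ t) (μ ∘ t) = mixture α μ :=
  Measure.sum_comp_equiv t fun j => α j • μ j

theorem updatingOperator_eq_inv_smul {g : X → ℝ≥0∞} {ρ : Measure X}
    (h0 : ∫⁻ x, g x ∂ρ ≠ 0) :
    updatingOperator g ρ = (∫⁻ x, g x ∂ρ)⁻¹ • ρ.withDensity g := by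
  rw [← withDensity_smul' _ _ (ENNReal.inv_ne_top.mpr h0)]
  simp only [updatingOperator, ENNReal.div_eq_inv_mul, Pi.smul_def, smul_eq_mul]

theorem lintegral_smul_updatingOperator {g : X → ℝ≥0∞} {ρ : Measure X}
    (h0 : ∫⁻ x, g x ∂ρ ≠ 0) (htop : ∫⁻ x, g x ∂ρ ≠ ∞) :
    (∫⁻ x, g x ∂ρ) • updatingOperator g ρ = ρ.withDensity g := by
  rw [updatingOperator_eq_inv_smul h0, smul_smul, ENNReal.mul_inv_cancel h0 htop, one_smul]

theorem updatingOperator_mixture {g : X → ℝ≥0∞} {α : ι → ℝ≥0∞} {μ : ι → Measure X}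
    (hα : α ≠ 0) (hpos : ∀ i, ∫⁻ x, g x ∂(μ i) ≠ 0) (hfin : ∀ i, ∫⁻ x, g x ∂(μ i) ≠ ∞) :
    updatingOperator g (mixture α μ) =
      mixture (updatedWeight g α μ) fun i => updatingOperator g (μ i) := by
  set P := ∫⁻ x, g x ∂(mixture α μ)
  set p : ι → ℝ≥0∞ := fun i => ∫⁻ x, g x ∂(μ i) with hp
  have weight_eq : P⁻¹ • (α * p) = updatedWeight g α μ :=
    funext fun _ => ENNReal.div_eq_inv_mul.symm
  calc updatingOperator g (mixture α μ)
      = P⁻¹ • (mixture α μ).withDensity g :=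
        updatingOperator_eq_inv_smul (lintegral_mixture_ne_zero hα hpos)
    _ = P⁻¹ • mixture α fun i => (μ i).withDensity g := by rw [withDensity_mixture]
    _ = P⁻¹ • mixture α fun i => p i • updatingOperator g (μ i) := by
        simp only [hp, lintegral_smul_updatingOperator (hpos _) (hfin _)]
    _ = mixture (updatedWeight g α μ) fun i => updatingOperator g (μ i) := by
        rw [mixture_smul, smul_mixture, weight_eq]

theorem tsum_updatedWeight {g : X → ℝ≥0∞} {α : ι → ℝ≥0∞} {μ : ι → Measure X}
    (h0 : ∫⁻ x, g x ∂(mixture α μ) ≠ 0) (htop : ∫⁻ x, g x ∂(mixture α μ) ≠ ∞) :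
    ∑' i, updatedWeight g α μ i = 1 := by
  simp only [updatedWeight, div_eq_mul_inv]
  rw [ENNReal.tsum_mul_right, ← lintegral_mixture, ENNReal.mul_inv_cancel h0 htop]

theorem updating_operator_mixture_general {g : X → ℝ≥0∞} {μ : ι → Measure X} {ν : κ → Measure X}
    (t : ι ≃ κ) (hpos : ∀ i, ∫⁻ x, g x ∂(μ i) ≠ 0) (hfin : ∀ i, ∫⁻ x, g x ∂(μ i) ≠ ∞)
    (hupd : ∀ i, updatingOperator g (μ i) = ν (t i))
    {α : ι → ℝ≥0∞} (hα : α ≠ 0) (htop : ∫⁻ x, g x ∂(mixture α μ) ≠ ∞) :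
    ∫⁻ x, g x ∂(mixture α μ) = ∑' i, α i * ∫⁻ x, g x ∂(μ i) ∧
      updatingOperator g (mixture α μ) = mixture (fun j => updatedWeight g α μ (t.symm j)) ν ∧
      ∑' j, updatedWeight g α μ (t.symm j) = 1 := by
  refine ⟨lintegral_mixture g α μ, ?_, ?_⟩
  · rw [updatingOperator_mixture hα hpos hfin, ← mixture_comp_equiv t]
    simp only [hupd, Function.comp_def, Equiv.symm_apply_apply]
  · rw [t.symm.tsum_eq]
    exact tsum_updatedWeight (lintegral_mixture_ne_zero hα hpos) htop

end

/-- The updating operator of nonlinear filtering maps mixtures to mixtures: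
if `φ(ν i θ) = ν (t i) (T θ)` for all `i, θ`, then for a mixture
`ν = ∑ᵢ αᵢ • ν i θ` with `∑ αᵢ = 1` and `∫ g dν < ∞`, one has
`φ(ν) = ∑ⱼ aⱼ • ν j (T θ)` with `aⱼ = α_{t⁻¹ j} · p(ν (t⁻¹ j) θ) / p(ν)`,
and the `aⱼ` sum to `1`. -/
theorem updating_operator_mixture
    {X : Type*} [MeasurableSpace X] (g : X → ℝ≥0∞) (hg : Measurable g)
    {Θ : Type*} [Nonempty Θ] (ν : ℕ → Θ → Measure X)
    (hνprob : ∀ i θ, IsProbabilityMeasure (ν i θ))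
    (T : Θ → Θ) (t : ℕ ≃ ℕ)
    (hppos : ∀ i θ, 0 < ∫⁻ x, g x ∂(ν i θ))
    (hpfin : ∀ i θ, ∫⁻ x, g x ∂(ν i θ) < ∞)
    (hupd : ∀ i θ,
      (ν i θ).withDensity (fun x => g x / ∫⁻ x, g x ∂(ν i θ)) = ν (t i) (T θ))
    (θ : Θ) (α : ℕ → ℝ≥0∞) (hα : ∑' i, α i = 1)
    (hfin : ∫⁻ x, g x ∂(Measure.sum fun i => α i • ν i θ) < ∞) :
    (∫⁻ x, g x ∂(Measure.sum fun i => α i • ν i θ)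
        = ∑' i, α i * ∫⁻ x, g x ∂(ν i θ)) ∧
    (Measure.sum fun i => α i • ν i θ).withDensity
        (fun x => g x / ∫⁻ x, g x ∂(Measure.sum fun i => α i • ν i θ))
      = Measure.sum (fun j =>
          (α (t.symm j) * (∫⁻ x, g x ∂(ν (t.symm j) θ))
            / ∫⁻ x, g x ∂(Measure.sum fun i => α i • ν i θ)) • ν j (T θ)) ∧
    (∑' j, α (t.symm j) * (∫⁻ x, g x ∂(ν (t.symm j) θ))
        / ∫⁻ x, g x ∂(Measure.sum fun i => α i • ν i θ)) = 1 := by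
  have hα0 : α ≠ 0 := by rintro rfl; simp at hα
  exact updating_operator_mixture_general (μ := (ν · θ)) (ν := (ν · (T θ))) t
    (fun i => (hppos i θ).ne') (fun i => (hpfin i θ).ne) (hupd · θ) hα0 hfin.ne
end

section
/- For μ, m ∈ ℝ, σ > 0 and i ∈ ℕ, let ν^i_{(μ,m,σ²)} be the probability measure on ℝ with density x ↦ (x+μ)^{2i}/C_{2i}(m+μ; σ²) with respect to the Gaussian measure N(m, σ²), where C_{2i}(c; σ²) = E((σZ + c)^{2i}) for Z standard Gaussian. Then for every real λ, a random variable X with law ν^i_{(μ,m,σ²)} satisfies E(exp(λX)) = [C_{2i}(m + μ + λσ²; σ²) / C_{2i}(m + μ; σ²)] · exp(λm + λ²σ²/2). -/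
open MeasureTheory ProbabilityTheory

/-- `C_{2i}(c; σ²) = E((σZ + c)^{2i})` for `Z` standard Gaussian. -/
noncomputable def gaussShiftedMoment (i : ℕ) (c σ : ℝ) : ℝ :=
  ∫ z, (σ * z + c) ^ (2 * i) ∂(gaussianReal 0 1)

/-- The probability measure `ν^i_{(μ,m,σ²)}` with density
`x ↦ (x+μ)^{2i}/C_{2i}(m+μ; σ²)` with respect to the Gaussian `N(m, σ²)`. -/
noncomputable def nuKalman (i : ℕ) (μ m σ : ℝ) : Measure ℝ :=
  (gaussianReal m (Real.toNNReal (σ ^ 2))).withDensity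
    (fun x => ENNReal.ofReal ((x + μ) ^ (2 * i) / gaussShiftedMoment i (m + μ) σ))

/-!
For a moment generating function `M`, tilting by `x ↦ exp (t * x)` turns `s ↦ M s` into
`s ↦ M (t + s) / M t`; for `N(m, v)` this quotient is the moment generating function of
`N(m + v * t, v)`. The factor `(x + μ) ^ (2 * i)` of the density of `ν^i_{(μ,m,σ²)}` does not see
this change of mean, so its integral against the tilted Gaussian is `C_{2i}` at the shifted centre.
-/

open scoped NNReal

lemma mgf_tilted_mul {Ω : Type*} [MeasurableSpace Ω] (P : Measure Ω) (X : Ω → ℝ) (t s : ℝ) :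
    mgf X (P.tilted (t * X ·)) s = mgf X P (t + s) / mgf X P t := by
  simp only [mgf, integral_exp_tilted, Pi.add_apply, add_mul]

lemma gaussianReal_tilted_mul (m : ℝ) (v : ℝ≥0) (t : ℝ) :
    (gaussianReal m v).tilted (t * ·) = gaussianReal (m + v * t) v := by
  have := isProbabilityMeasure_tilted (integrable_exp_mul_gaussianReal (μ := m) (v := v) t)
  have mgf_eq :
      mgf id (gaussianReal (m + v * t) v) = mgf id ((gaussianReal m v).tilted (t * ·)) := by
    ext s
    calc mgf id (gaussianReal (m + v * t) v) s
        = mgf id (gaussianReal m v) (t + s) / mgf id (gaussianReal m v) t := by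
          simp only [mgf_id_gaussianReal, ← Real.exp_sub]
          ring_nf
      _ = mgf id ((gaussianReal m v).tilted (t * ·)) s := (mgf_tilted_mul _ id t s).symm
  refine (Measure.ext_of_complexMGF_id_eq <| funext fun z ↦ eqOn_complexMGF_of_mgf mgf_eq ?_).symm
  simp

lemma integral_exp_mul_smul_gaussianReal {E : Type*} [NormedAddCommGroup E] [NormedSpace ℝ E]
    (m : ℝ) (v : ℝ≥0) (t : ℝ) (f : ℝ → E) :
    ∫ x, Real.exp (t * x) • f x ∂gaussianReal m v
      = Real.exp (m * t + v * t ^ 2 / 2) • ∫ x, f x ∂gaussianReal (m + v * t) v := by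
  have tilted_integral := integral_tilted_mul_eq_mgf (X := id) (μ := gaussianReal m v) (t := t) f
  simp only [id_eq, gaussianReal_tilted_mul, mgf_id_gaussianReal] at tilted_integral
  rw [tilted_integral, ← integral_smul]
  simp only [smul_smul, mul_div_cancel₀ _ (Real.exp_ne_zero _)]

lemma gaussianReal_map_mul_add (m : ℝ) (v : ℝ≥0) (a b : ℝ) :
    (gaussianReal m v).map (fun x ↦ a * x + b)
      = gaussianReal (a * m + b) ((a ^ 2).toNNReal * v) := by
  rw [Real.toNNReal_of_nonneg (sq_nonneg a), ← gaussianReal_map_add_const,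
    ← gaussianReal_map_const_mul, Measure.map_map (by fun_prop) (by fun_prop)]
  rfl

lemma gaussShiftedMoment_nonneg (i : ℕ) (c σ : ℝ) : 0 ≤ gaussShiftedMoment i c σ :=
  integral_nonneg fun _ ↦ (even_two_mul i).pow_nonneg _

lemma gaussShiftedMoment_add (i : ℕ) (a b σ : ℝ) :
    gaussShiftedMoment i (a + b) σ
      = ∫ x, (x + b) ^ (2 * i) ∂gaussianReal a (σ ^ 2).toNNReal := by
  have affine_law : gaussianReal a (σ ^ 2).toNNReal
      = (gaussianReal 0 1).map (fun z ↦ σ * z + a) := by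
    rw [gaussianReal_map_mul_add, mul_zero, zero_add, mul_one]
  rw [affine_law, integral_map (by fun_prop) (by fun_prop)]
  simp only [gaussShiftedMoment, add_assoc]

lemma integral_nuKalman {E : Type*} [NormedAddCommGroup E] [NormedSpace ℝ E]
    (i : ℕ) (μ m σ : ℝ) (f : ℝ → E) :
    ∫ x, f x ∂nuKalman i μ m σ
      = (gaussShiftedMoment i (m + μ) σ)⁻¹ •
          ∫ x, (x + μ) ^ (2 * i) • f x ∂gaussianReal m (σ ^ 2).toNNReal := by
  have density_nonneg (x : ℝ) : 0 ≤ (x + μ) ^ (2 * i) / gaussShiftedMoment i (m + μ) σ :=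
    div_nonneg ((even_two_mul i).pow_nonneg _) (gaussShiftedMoment_nonneg i _ σ)
  rw [nuKalman, integral_withDensity_eq_integral_toReal_smul (by fun_prop) (by simp),
    ← integral_smul]
  simp only [ENNReal.toReal_ofReal (density_nonneg _), smul_smul, inv_mul_eq_div]

/-- Laplace transform of `ν^i_{(μ,m,σ²)}`: for every real `λ`,
`E(exp(λX)) = [C_{2i}(m+μ+λσ²; σ²)/C_{2i}(m+μ; σ²)] · exp(λm + λ²σ²/2)`. -/
theorem nuKalman_laplace_transform (i : ℕ) (μ m σ : ℝ) (hσ : 0 < σ) (l : ℝ) :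
    ∫ x, Real.exp (l * x) ∂(nuKalman i μ m σ)
      = gaussShiftedMoment i (m + μ + l * σ ^ 2) σ / gaussShiftedMoment i (m + μ) σ
          * Real.exp (l * m + l ^ 2 * σ ^ 2 / 2) := by
  have variance_coe : ((σ ^ 2).toNNReal : ℝ) = σ ^ 2 := Real.coe_toNNReal _ (sq_nonneg σ)
  have shifted_center : m + μ + l * σ ^ 2 = m + σ ^ 2 * l + μ := by ring
  calc ∫ x, Real.exp (l * x) ∂(nuKalman i μ m σ)
      = (gaussShiftedMoment i (m + μ) σ)⁻¹ *
          ∫ x, Real.exp (l * x) * (x + μ) ^ (2 * i) ∂gaussianReal m (σ ^ 2).toNNReal := by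
        simp only [integral_nuKalman, smul_eq_mul, mul_comm (Real.exp _)]
    _ = (gaussShiftedMoment i (m + μ) σ)⁻¹ *
          (Real.exp (m * l + σ ^ 2 * l ^ 2 / 2) *
            ∫ x, (x + μ) ^ (2 * i) ∂gaussianReal (m + σ ^ 2 * l) (σ ^ 2).toNNReal) := by
        simp only [← smul_eq_mul (Real.exp _), integral_exp_mul_smul_gaussianReal, variance_coe]
    _ = gaussShiftedMoment i (m + μ + l * σ ^ 2) σ / gaussShiftedMoment i (m + μ) σ
          * Real.exp (l * m + l ^ 2 * σ ^ 2 / 2) := by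
        rw [← gaussShiftedMoment_add, shifted_center]
        ring_nf
end

section
/- Let h ∈ ℝ, γ > 0, μ, m ∈ ℝ, σ > 0, i ∈ ℕ and y ∈ ℝ. Let ν = ν^i_{(μ,m,σ²)} be the probability measure on ℝ with density x ↦ (x+μ)^{2i}/C_{2i}(m+μ; σ²) with respect to N(m, σ²), and let f_x(y) = (2πγ²)^{-1/2} exp(−(y − hx)²/(2γ²)). Set p_ν(y) = ∫_ℝ f_x(y) dν(x). Then 0 < p_ν(y) < ∞ and the probability measure with density x ↦ f_x(y)/p_ν(y) with respect to ν equals ν^i_{(μ, m̂, σ̂²)}, where m̂ = (mγ² + h y σ²)/(γ² + h²σ²) and σ̂² = σ²γ²/(γ² + h²σ²). -/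
open MeasureTheory ProbabilityTheory

/-!
Reweighting a measure by a function and normalizing is an operation whose iterates only depend on
the product of the weights, so any two reweightings commute. The measure `ν^i_{(μ,m,σ²)}` is the
Gaussian `N(m, σ²)` reweighted by `x ↦ (x + μ)^{2i}`; hence the Bayesian update may be carried out
on `N(m, σ²)` first, where it is the classical conjugacy of Gaussian prior and Gaussian likelihood.
-/

open scoped ENNReal NNReal

section BayesUpdate

variable {α : Type*} [MeasurableSpace α] {ν : Measure α} {f g : α → ℝ≥0∞}

/-- The posterior of the prior `ν` under the likelihood `f`: the measure `f · ν` divided by its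
total mass. Bayes' rule is stated for unnormalized weights `f`, so that the polynomial weight in
`nuKalman` and the observation likelihood are instances of the same operation. -/
noncomputable def bayesUpdate (ν : Measure α) (f : α → ℝ≥0∞) : Measure α :=
  ν.withDensity fun x => f x / ∫⁻ x, f x ∂ν

lemma bayesUpdate_eq_smul (hf : Measurable f) :
    bayesUpdate ν f = (∫⁻ x, f x ∂ν)⁻¹ • ν.withDensity f := by
  rw [← withDensity_smul _ hf]
  simp only [bayesUpdate, ENNReal.div_eq_inv_mul, Pi.smul_def, smul_eq_mul]

lemma isProbabilityMeasure_bayesUpdate (hf₀ : ∫⁻ x, f x ∂ν ≠ 0) (hf : ∫⁻ x, f x ∂ν ≠ ∞) :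
    IsProbabilityMeasure (bayesUpdate ν f) := by
  refine ⟨?_⟩
  rw [bayesUpdate, withDensity_apply _ MeasurableSet.univ, Measure.restrict_univ]
  simp only [div_eq_mul_inv]
  rw [lintegral_mul_const' _ _ (ENNReal.inv_ne_top.2 hf₀), ENNReal.mul_inv_cancel hf₀ hf]

lemma bayesUpdate_bayesUpdate (hf : Measurable f) (hg : Measurable g)
    (hf₀ : ∫⁻ x, f x ∂ν ≠ 0) (hf_top : ∫⁻ x, f x ∂ν ≠ ∞) :
    bayesUpdate (bayesUpdate ν f) g = bayesUpdate ν (f * g) := by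
  have evidence : ∫⁻ x, g x ∂(bayesUpdate ν f) = (∫⁻ x, f x ∂ν)⁻¹ * ∫⁻ x, (f * g) x ∂ν := by
    rw [bayesUpdate_eq_smul hf, lintegral_smul_measure, smul_eq_mul,
      lintegral_withDensity_eq_lintegral_mul ν hf hg]
  rw [bayesUpdate_eq_smul hg, bayesUpdate_eq_smul (hf.mul hg), evidence, bayesUpdate_eq_smul hf,
    withDensity_smul_measure, ← withDensity_mul ν hf hg, smul_smul,
    ENNReal.mul_inv (Or.inl (ENNReal.inv_ne_zero.2 hf_top)) (Or.inl (ENNReal.inv_ne_top.2 hf₀)),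
    inv_inv, mul_right_comm, ENNReal.mul_inv_cancel hf₀ hf_top, one_mul]

lemma bayesUpdate_comm (hf : Measurable f) (hg : Measurable g)
    (hf₀ : ∫⁻ x, f x ∂ν ≠ 0) (hf_top : ∫⁻ x, f x ∂ν ≠ ∞)
    (hg₀ : ∫⁻ x, g x ∂ν ≠ 0) (hg_top : ∫⁻ x, g x ∂ν ≠ ∞) :
    bayesUpdate (bayesUpdate ν f) g = bayesUpdate (bayesUpdate ν g) f := by
  rw [bayesUpdate_bayesUpdate hf hg hf₀ hf_top, bayesUpdate_bayesUpdate hg hf hg₀ hg_top, mul_comm]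

lemma bayesUpdate_eq_of_withDensity_eq_smul {ρ : Measure α} [IsProbabilityMeasure ρ] {c : ℝ≥0∞}
    (hf : Measurable f) (hc₀ : c ≠ 0) (hc : c ≠ ∞) (h : ν.withDensity f = c • ρ) :
    bayesUpdate ν f = ρ := by
  have evidence : ∫⁻ x, f x ∂ν = c := by
    rw [← setLIntegral_univ, ← withDensity_apply _ MeasurableSet.univ, h, Measure.smul_apply,
      measure_univ, smul_eq_mul, mul_one]
  rw [bayesUpdate_eq_smul hf, evidence, h, smul_smul, ENNReal.inv_mul_cancel hc₀ hc, one_smul]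

end BayesUpdate

section GaussianLikelihood

variable {v w : ℝ≥0}

lemma gaussianPDFReal_le (m : ℝ) (v : ℝ≥0) (x : ℝ) :
    gaussianPDFReal m v x ≤ (√(2 * Real.pi * v))⁻¹ :=
  mul_le_of_le_one_right (by positivity) <| Real.exp_le_one_iff.2 <|
    div_nonpos_of_nonpos_of_nonneg (neg_nonpos.2 (sq_nonneg _)) (by positivity)

lemma lintegral_gaussianPDF_mean_ne_zero {α : Type*} [MeasurableSpace α] (ν : Measure α) [NeZero ν]
    {a : α → ℝ} (ha : Measurable a) (y : ℝ) (hw : w ≠ 0) :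
    ∫⁻ x, gaussianPDF (a x) w y ∂ν ≠ 0 := by
  have support_eq : (Function.support fun x => gaussianPDF (a x) w y) = Set.univ :=
    Set.eq_univ_of_forall fun x => (gaussianPDF_pos (a x) hw y).ne'
  rw [← pos_iff_ne_zero, lintegral_pos_iff_support (by fun_prop), support_eq]
  exact NeZero.pos _

lemma lintegral_gaussianPDF_mean_lt_top {α : Type*} [MeasurableSpace α] (ν : Measure α)
    [IsFiniteMeasure ν] (a : α → ℝ) (w : ℝ≥0) (y : ℝ) : ∫⁻ x, gaussianPDF (a x) w y ∂ν < ∞ :=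
  (lintegral_mono fun x => ENNReal.ofReal_le_ofReal (gaussianPDFReal_le (a x) w y)).trans_lt
    (lintegral_const_lt_top ENNReal.ofReal_ne_top)

/-- Prior times likelihood is evidence times posterior, by completing the square in `x`. Variances
are nonnegative reals, hence `‖h‖₊ ^ 2` in place of `h ^ 2`. -/
lemma gaussianPDFReal_mul_gaussianPDFReal (h m x y : ℝ) (hv : v ≠ 0) (hw : w ≠ 0) :
    gaussianPDFReal m v x * gaussianPDFReal (h * x) w y =
      gaussianPDFReal (h * m) (w + ‖h‖₊ ^ 2 * v) y *
        gaussianPDFReal ((m * w + h * y * v) / (w + h ^ 2 * v)) (v * w / (w + ‖h‖₊ ^ 2 * v)) x := by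
  have normalization : (√(2 * Real.pi * v))⁻¹ * (√(2 * Real.pi * w))⁻¹ =
      (√(2 * Real.pi * (w + h ^ 2 * v)))⁻¹ * (√(2 * Real.pi * (v * w / (w + h ^ 2 * v))))⁻¹ := by
    rw [← mul_inv, ← mul_inv, ← Real.sqrt_mul (by positivity), ← Real.sqrt_mul (by positivity)]
    congr 2
    field_simp
  have exponent : -(x - m) ^ 2 / (2 * v) + -(y - h * x) ^ 2 / (2 * w) =
      -(y - h * m) ^ 2 / (2 * (w + h ^ 2 * v)) +
        -(x - (m * w + h * y * v) / (w + h ^ 2 * v)) ^ 2 / (2 * (v * w / (w + h ^ 2 * v))) := by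
    field_simp
    ring
  simp only [gaussianPDFReal, NNReal.coe_add, NNReal.coe_mul, NNReal.coe_div, NNReal.coe_pow,
    coe_nnnorm, Real.norm_eq_abs, sq_abs]
  rw [mul_mul_mul_comm, normalization, ← Real.exp_add, exponent, Real.exp_add, mul_mul_mul_comm]

lemma gaussianReal_withDensity_gaussianPDF (h m y : ℝ) (hv : v ≠ 0) (hw : w ≠ 0) :
    (gaussianReal m v).withDensity (fun x => gaussianPDF (h * x) w y) =
      gaussianPDF (h * m) (w + ‖h‖₊ ^ 2 * v) y •
        gaussianReal ((m * w + h * y * v) / (w + h ^ 2 * v)) (v * w / (w + ‖h‖₊ ^ 2 * v)) := by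
  have hv' : v * w / (w + ‖h‖₊ ^ 2 * v) ≠ 0 := by positivity
  rw [gaussianReal_of_var_ne_zero _ hv, gaussianReal_of_var_ne_zero _ hv',
    ← withDensity_mul _ (by fun_prop) (by fun_prop),
    ← withDensity_smul _ (by fun_prop)]
  congr 1 with x
  simp only [Pi.mul_apply, Pi.smul_apply, smul_eq_mul, gaussianPDF,
    ← ENNReal.ofReal_mul (gaussianPDFReal_nonneg _ _ _),
    gaussianPDFReal_mul_gaussianPDFReal h m x y hv hw]

lemma bayesUpdate_gaussianReal (h m y : ℝ) (hv : v ≠ 0) (hw : w ≠ 0) :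
    bayesUpdate (gaussianReal m v) (fun x => gaussianPDF (h * x) w y) =
      gaussianReal ((m * w + h * y * v) / (w + h ^ 2 * v)) (v * w / (w + ‖h‖₊ ^ 2 * v)) :=
  bayesUpdate_eq_of_withDensity_eq_smul (by fun_prop)
    (gaussianPDF_pos _ (by positivity) y).ne' gaussianPDF_ne_top
    (gaussianReal_withDensity_gaussianPDF h m y hv hw)

end GaussianLikelihood

section ShiftedMoment

lemma integrable_add_pow_gaussianReal (m : ℝ) (v : ℝ≥0) (μ : ℝ) (n : ℕ) :
    Integrable (fun x => (x + μ) ^ n) (gaussianReal m v) := by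
  have memLp_add : MemLp (fun x : ℝ => x + μ) n (gaussianReal m v) :=
    (memLp_id_gaussianReal n).add (memLp_const μ)
  exact (integrable_norm_iff (by fun_prop)).1 <| by
    simpa only [norm_pow] using memLp_add.integrable_norm_pow'

lemma integral_add_pow_even_gaussianReal_pos (m : ℝ) {v : ℝ≥0} (hv : v ≠ 0) (μ : ℝ) (i : ℕ) :
    0 < ∫ x, (x + μ) ^ (2 * i) ∂(gaussianReal m v) := by
  have := nullSingletonClass_gaussianReal (μ := m) hv
  rw [integral_pos_iff_support_of_nonneg (fun x => (even_two_mul i).pow_nonneg _)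
    (integrable_add_pow_gaussianReal m v μ (2 * i))]
  have compl_subset_support : {-μ}ᶜ ⊆ Function.support fun x : ℝ => (x + μ) ^ (2 * i) :=
    fun x hx => pow_ne_zero _ fun h => hx (eq_neg_of_add_eq_zero_left h)
  calc (0 : ℝ≥0∞) < 1 := one_pos
    _ = gaussianReal m v {-μ}ᶜ :=
        ((prob_compl_eq_one_iff (measurableSet_singleton _)).2 (measure_singleton _)).symm
    _ ≤ _ := measure_mono compl_subset_support

lemma gaussianReal_zero_one_map_affine (m σ : ℝ) :
    (gaussianReal 0 1).map (fun z => σ * z + m) = gaussianReal m (Real.toNNReal (σ ^ 2)) := by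
  have map_add_mul : (gaussianReal 0 1).map (fun z => σ * z + m) =
      ((gaussianReal 0 1).map (σ * ·)).map (· + m) :=
    (Measure.map_map (measurable_add_const m) (measurable_const_mul σ)).symm
  rw [map_add_mul, gaussianReal_map_const_mul, gaussianReal_map_add_const, mul_zero, zero_add,
    mul_one, Real.toNNReal_of_nonneg (sq_nonneg σ)]

lemma gaussShiftedMoment_eq_integral_gaussianReal (i : ℕ) (μ m σ : ℝ) :
    gaussShiftedMoment i (m + μ) σ =
      ∫ x, (x + μ) ^ (2 * i) ∂(gaussianReal m (Real.toNNReal (σ ^ 2))) := by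
  rw [← gaussianReal_zero_one_map_affine, integral_map (by fun_prop) (by fun_prop)]
  simp only [gaussShiftedMoment, add_assoc]

lemma lintegral_add_pow_gaussianReal (i : ℕ) (μ m σ : ℝ) :
    ∫⁻ x, ENNReal.ofReal ((x + μ) ^ (2 * i)) ∂(gaussianReal m (Real.toNNReal (σ ^ 2))) =
      ENNReal.ofReal (gaussShiftedMoment i (m + μ) σ) := by
  rw [gaussShiftedMoment_eq_integral_gaussianReal, ofReal_integral_eq_lintegral_ofReal
    (integrable_add_pow_gaussianReal _ _ _ _) (ae_of_all _ fun x => (even_two_mul i).pow_nonneg _)]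

lemma lintegral_add_pow_gaussianReal_ne_top (i : ℕ) (μ m σ : ℝ) :
    ∫⁻ x, ENNReal.ofReal ((x + μ) ^ (2 * i)) ∂(gaussianReal m (Real.toNNReal (σ ^ 2))) ≠ ∞ :=
  (lintegral_add_pow_gaussianReal i μ m σ).trans_ne ENNReal.ofReal_ne_top

end ShiftedMoment

section NuKalman

variable {σ : ℝ}

lemma toNNReal_sq_ne_zero (hσ : σ ≠ 0) : Real.toNNReal (σ ^ 2) ≠ 0 :=
  (Real.toNNReal_pos.2 (by positivity)).ne'

lemma gaussShiftedMoment_pos (i : ℕ) (c : ℝ) (hσ : σ ≠ 0) : 0 < gaussShiftedMoment i c σ := by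
  rw [← add_zero c, gaussShiftedMoment_eq_integral_gaussianReal]
  exact integral_add_pow_even_gaussianReal_pos c (toNNReal_sq_ne_zero hσ) 0 i

lemma lintegral_add_pow_gaussianReal_ne_zero (i : ℕ) (μ m : ℝ) (hσ : σ ≠ 0) :
    ∫⁻ x, ENNReal.ofReal ((x + μ) ^ (2 * i)) ∂(gaussianReal m (Real.toNNReal (σ ^ 2))) ≠ 0 := by
  rw [lintegral_add_pow_gaussianReal]
  exact (ENNReal.ofReal_pos.2 (gaussShiftedMoment_pos i (m + μ) hσ)).ne'

lemma nuKalman_eq_bayesUpdate (i : ℕ) (μ m : ℝ) (hσ : σ ≠ 0) :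
    nuKalman i μ m σ = bayesUpdate (gaussianReal m (Real.toNNReal (σ ^ 2)))
      (fun x => ENNReal.ofReal ((x + μ) ^ (2 * i))) := by
  simp only [nuKalman, bayesUpdate, lintegral_add_pow_gaussianReal,
    ENNReal.ofReal_div_of_pos (gaussShiftedMoment_pos i (m + μ) hσ)]

lemma isProbabilityMeasure_nuKalman (i : ℕ) (μ m : ℝ) (hσ : σ ≠ 0) :
    IsProbabilityMeasure (nuKalman i μ m σ) := by
  rw [nuKalman_eq_bayesUpdate i μ m hσ]
  exact isProbabilityMeasure_bayesUpdate (lintegral_add_pow_gaussianReal_ne_zero i μ m hσ)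
    (lintegral_add_pow_gaussianReal_ne_top i μ m σ)

lemma toNNReal_sq_posteriorStdDev (h γ σ : ℝ) :
    Real.toNNReal ((σ * γ / √(γ ^ 2 + h ^ 2 * σ ^ 2)) ^ 2) =
      Real.toNNReal (σ ^ 2) * Real.toNNReal (γ ^ 2) /
        (Real.toNNReal (γ ^ 2) + ‖h‖₊ ^ 2 * Real.toNNReal (σ ^ 2)) := by
  apply NNReal.eq
  push_cast [Real.coe_toNNReal _ (sq_nonneg _), Real.norm_eq_abs, sq_abs]
  rw [div_pow, mul_pow, Real.sq_sqrt (by positivity)]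

lemma bayesUpdate_nuKalman (h μ m y : ℝ) (i : ℕ) {γ σ : ℝ} (hγ : γ ≠ 0) (hσ : σ ≠ 0) :
    bayesUpdate (nuKalman i μ m σ) (fun x => gaussianPDF (h * x) (Real.toNNReal (γ ^ 2)) y) =
      nuKalman i μ ((m * γ ^ 2 + h * y * σ ^ 2) / (γ ^ 2 + h ^ 2 * σ ^ 2))
        (σ * γ / √(γ ^ 2 + h ^ 2 * σ ^ 2)) := by
  have hσ' : σ * γ / √(γ ^ 2 + h ^ 2 * σ ^ 2) ≠ 0 := by positivity
  have hv := toNNReal_sq_ne_zero hσ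
  have hw := toNNReal_sq_ne_zero hγ
  rw [nuKalman_eq_bayesUpdate i μ m hσ, nuKalman_eq_bayesUpdate i μ _ hσ',
    bayesUpdate_comm (by fun_prop) (by fun_prop)
      (lintegral_add_pow_gaussianReal_ne_zero i μ m hσ)
      (lintegral_add_pow_gaussianReal_ne_top i μ m σ)
      (lintegral_gaussianPDF_mean_ne_zero _ (measurable_const_mul h) y hw)
      (lintegral_gaussianPDF_mean_lt_top _ _ _ y).ne,
    bayesUpdate_gaussianReal h m y hv hw, toNNReal_sq_posteriorStdDev,
    Real.coe_toNNReal _ (sq_nonneg γ), Real.coe_toNNReal _ (sq_nonneg σ)]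

lemma ofReal_likelihood_eq_gaussianPDF (h γ x y : ℝ) :
    ENNReal.ofReal ((√(2 * Real.pi * γ ^ 2))⁻¹ * Real.exp (-(y - h * x) ^ 2 / (2 * γ ^ 2))) =
      gaussianPDF (h * x) (Real.toNNReal (γ ^ 2)) y := by
  rw [gaussianPDF, gaussianPDFReal, Real.coe_toNNReal _ (sq_nonneg γ)]

end NuKalman

/-- Updating step of the Kalman filter `y = hx + γw`: conditioning
`ν^i_{(μ,m,σ²)}` on the observation `y` (via the Gaussian likelihood
`f_x(y) = (2πγ²)^{-1/2} exp(−(y−hx)²/(2γ²))`) yields `ν^i_{(μ,m̂,σ̂²)}` with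
`m̂ = (mγ² + hyσ²)/(γ² + h²σ²)` and `σ̂² = σ²γ²/(γ² + h²σ²)`. -/
theorem nuKalman_updating (h γ μ m σ : ℝ) (hγ : 0 < γ) (hσ : 0 < σ) (i : ℕ) (y : ℝ) :
    0 < ∫⁻ x, ENNReal.ofReal
          ((Real.sqrt (2 * Real.pi * γ ^ 2))⁻¹
            * Real.exp (-(y - h * x) ^ 2 / (2 * γ ^ 2))) ∂(nuKalman i μ m σ) ∧
    (∫⁻ x, ENNReal.ofReal
          ((Real.sqrt (2 * Real.pi * γ ^ 2))⁻¹
            * Real.exp (-(y - h * x) ^ 2 / (2 * γ ^ 2))) ∂(nuKalman i μ m σ)) < ⊤ ∧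
    (nuKalman i μ m σ).withDensity
        (fun x => ENNReal.ofReal
            ((Real.sqrt (2 * Real.pi * γ ^ 2))⁻¹
              * Real.exp (-(y - h * x) ^ 2 / (2 * γ ^ 2)))
          / ∫⁻ x, ENNReal.ofReal
              ((Real.sqrt (2 * Real.pi * γ ^ 2))⁻¹
                * Real.exp (-(y - h * x) ^ 2 / (2 * γ ^ 2))) ∂(nuKalman i μ m σ))
      = nuKalman i μ ((m * γ ^ 2 + h * y * σ ^ 2) / (γ ^ 2 + h ^ 2 * σ ^ 2))
          (σ * γ / Real.sqrt (γ ^ 2 + h ^ 2 * σ ^ 2)) := by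
  have := isProbabilityMeasure_nuKalman i μ m hσ.ne'
  simp only [ofReal_likelihood_eq_gaussianPDF]
  exact ⟨pos_iff_ne_zero.2 <|
      lintegral_gaussianPDF_mean_ne_zero _ (measurable_const_mul h) y (toNNReal_sq_ne_zero hγ.ne'),
    lintegral_gaussianPDF_mean_lt_top _ _ _ y, bayesUpdate_nuKalman h μ m y i hγ.ne' hσ.ne'⟩
end

section
/- Let δ ≥ 1 be real, λ > 0, σ > 0, i ∈ ℕ and y > 0. Let ν^{i,(δ)}_σ be the probability measure on (0, ∞) with Lebesgue density x ↦ 1_{(x>0)} (2/(σ√(2π))) · x^{δ−1+2i}/(C_{δ−1+2i} σ^{δ−1+2i}) · exp(−x²/(2σ²)), where C_α = ∫_ℝ |u|^α (2π)^{−1/2} e^{−u²/2} du, and let f_x(y) = 2λx²/y³ · exp(−λx²/y²) for x, y > 0. Set p(y) = ∫_0^∞ f_x(y) dν^{i,(δ)}_σ(x). Then 0 < p(y) < ∞ and the probability measure with density x ↦ f_x(y)/p(y) with respect to ν^{i,(δ)}_σ equals ν^{i+1,(δ)}_{T_y(σ)}, where T_y(σ) = σ y / (y² + 2λσ²)^{1/2}.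 -/
open MeasureTheory

/-- `C_α = ∫ |u|^α (2π)^{−1/2} e^{−u²/2} du`, the `α`-th absolute moment of a
standard Gaussian. -/
noncomputable def gaussAbsMoment (α : ℝ) : ℝ :=
  ∫ u : ℝ, |u| ^ α * (Real.sqrt (2 * Real.pi))⁻¹ * Real.exp (-u ^ 2 / 2)

/-- The probability measure `ν^{i,(δ)}_σ` on `(0,∞)` with Lebesgue density
`x ↦ 1_{(x>0)} (2/(σ√(2π))) x^{δ−1+2i}/(C_{δ−1+2i} σ^{δ−1+2i}) exp(−x²/(2σ²))`. -/
noncomputable def nuRadial (δ : ℝ) (i : ℕ) (σ : ℝ) : Measure ℝ :=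
  volume.withDensity (fun x => ENNReal.ofReal
    (if 0 < x then
      2 / (σ * Real.sqrt (2 * Real.pi))
        * x ^ (δ - 1 + 2 * (i : ℝ))
        / (gaussAbsMoment (δ - 1 + 2 * (i : ℝ)) * σ ^ (δ - 1 + 2 * (i : ℝ)))
        * Real.exp (-x ^ 2 / (2 * σ ^ 2))
    else 0))

/-!
The prior `ν^{i,(δ)}_σ` is the normalisation of the weight `x ^ α * exp (-b x²)` on `(0, ∞)` with
`α = δ - 1 + 2i` and `b = 1 / (2σ²)`. As a function of `x`, the likelihood is a multiple of the
weight with parameters `(2, λ / y²)`, and parameters of weights add under products. So the posterior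
is the normalised weight with parameters `(α + 2, b + λ / y²)`, that is, `i` becomes `i + 1` and
`b + λ / y² = 1 / (2 T_y(σ)²)`. Normalisation absorbs all constant factors, so their values are
irrelevant as long as they are positive and finite.
-/

open Set Real

/-- The unnormalised density `x ^ α * exp (-b x²)`; `b` plays the role of the precision
`1 / (2σ²)`, which is the parameter that adds up under products. -/
noncomputable def radialWeight (α b x : ℝ) : ℝ :=
  x ^ α * exp (-b * x ^ 2)

/-- The measure on `(0, ∞)` with Lebesgue density `radialWeight α b`, of which `nuRadial` is the
normalisation. -/
noncomputable def radialMeasure (α b : ℝ) : Measure ℝ :=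
  (volume.restrict (Ioi 0)).withDensity fun x => ENNReal.ofReal (radialWeight α b x)

section RadialWeight

variable {α β b d σ x : ℝ}

lemma measurable_radialWeight (α b : ℝ) : Measurable (radialWeight α b) := by
  unfold radialWeight
  fun_prop

lemma radialWeight_nonneg (hx : 0 ≤ x) : 0 ≤ radialWeight α b x := by
  unfold radialWeight
  positivity

lemma radialWeight_mul_radialWeight (hx : 0 < x) :
    radialWeight α b x * radialWeight β d x = radialWeight (α + β) (b + d) x := by
  unfold radialWeight
  rw [rpow_add hx, neg_add, add_mul, exp_add]
  ring

lemma radialWeight_inv_mul (hσ : 0 < σ) (hx : 0 ≤ x) :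
    radialWeight α b (σ⁻¹ * x) = (σ ^ α)⁻¹ * radialWeight α (b / σ ^ 2) x := by
  unfold radialWeight
  rw [mul_rpow (inv_nonneg.2 hσ.le) hx, inv_rpow hσ.le, mul_assoc]
  congr 3
  ring

lemma integral_radialWeight_div_sq (hσ : 0 < σ) :
    ∫ x in Ioi 0, radialWeight α (b / σ ^ 2) x
      = σ * σ ^ α * ∫ x in Ioi 0, radialWeight α b x := by
  have scaling : σ * ∫ x in Ioi 0, radialWeight α b x
      = (σ ^ α)⁻¹ * ∫ x in Ioi 0, radialWeight α (b / σ ^ 2) x :=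
    calc σ * ∫ x in Ioi 0, radialWeight α b x
      _ = ∫ x in Ioi 0, radialWeight α b (σ⁻¹ * x) := by
        rw [integral_comp_mul_left_Ioi _ _ (inv_pos.2 hσ), mul_zero, inv_inv, smul_eq_mul]
      _ = ∫ x in Ioi 0, (σ ^ α)⁻¹ * radialWeight α (b / σ ^ 2) x :=
        setIntegral_congr_fun measurableSet_Ioi fun x hx => radialWeight_inv_mul hσ (le_of_lt hx)
      _ = _ := integral_const_mul _ _
  rw [mul_right_comm, scaling, mul_right_comm, inv_mul_cancel₀ (rpow_pos_of_pos hσ α).ne', one_mul]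

lemma integral_radialWeight_pos (hα : -1 < α) (hb : 0 < b) :
    0 < ∫ x in Ioi 0, radialWeight α b x := by
  have gamma_formula := integral_rpow_mul_exp_neg_mul_rpow two_pos hα hb
  simp only [rpow_two] at gamma_formula
  have := Gamma_pos_of_pos (s := (α + 1) / 2) (by linarith)
  unfold radialWeight
  rw [gamma_formula]
  positivity

end RadialWeight

section RadialMeasure

variable {α β b d : ℝ}

lemma radialMeasure_withDensity_radialWeight :
    (radialMeasure α b).withDensity (fun x => ENNReal.ofReal (radialWeight β d x))
      = radialMeasure (α + β) (b + d) := by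
  unfold radialMeasure
  rw [← withDensity_mul _ (measurable_radialWeight α b).ennreal_ofReal
    (measurable_radialWeight β d).ennreal_ofReal]
  refine withDensity_congr_ae <|
    (ae_restrict_iff' measurableSet_Ioi).2 <| ae_of_all _ fun x hx => ?_
  rw [Pi.mul_apply, ← ENNReal.ofReal_mul (radialWeight_nonneg (le_of_lt hx)),
    radialWeight_mul_radialWeight hx]

lemma radialMeasure_univ (hα : -1 < α) (hb : 0 < b) :
    radialMeasure α b univ = ENNReal.ofReal (∫ x in Ioi 0, radialWeight α b x) := by
  rw [radialMeasure, withDensity_apply _ MeasurableSet.univ, Measure.restrict_univ]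
  refine (ofReal_integral_eq_lintegral_ofReal (integrableOn_rpow_mul_exp_neg_mul_sq hb hα) ?_).symm
  exact (ae_restrict_iff' measurableSet_Ioi).2 <|
    ae_of_all _ fun x hx => radialWeight_nonneg (le_of_lt hx)

lemma radialMeasure_univ_pos (hα : -1 < α) (hb : 0 < b) : 0 < radialMeasure α b univ := by
  rw [radialMeasure_univ hα hb]
  exact ENNReal.ofReal_pos.2 (integral_radialWeight_pos hα hb)

lemma radialMeasure_univ_lt_top (hα : -1 < α) (hb : 0 < b) : radialMeasure α b univ < ⊤ := by
  rw [radialMeasure_univ hα hb]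
  exact ENNReal.ofReal_lt_top

end RadialMeasure

section Normalisation

lemma gaussAbsMoment_eq_integral_radialWeight (α : ℝ) :
    gaussAbsMoment α = 2 / √(2 * π) * ∫ x in Ioi 0, radialWeight α (1 / 2) x := by
  have folded := integral_comp_abs (f := fun u : ℝ => u ^ α * (√(2 * π))⁻¹ * exp (-u ^ 2 / 2))
  simp only [sq_abs] at folded
  rw [gaussAbsMoment, folded, div_eq_mul_inv, mul_assoc, ← integral_const_mul (√(2 * π))⁻¹]
  congr 2 with x
  rw [radialWeight, show -(1 / 2) * x ^ 2 = -x ^ 2 / 2 by ring]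
  ring

lemma integral_radialWeight_eq_gaussAbsMoment (α : ℝ) {σ : ℝ} (hσ : 0 < σ) :
    ∫ x in Ioi 0, radialWeight α (1 / (2 * σ ^ 2)) x
      = σ * √(2 * π) / 2 * (gaussAbsMoment α * σ ^ α) := by
  rw [← div_div, integral_radialWeight_div_sq hσ, gaussAbsMoment_eq_integral_radialWeight]
  field_simp

lemma nuRadial_density_eq (α : ℝ) {σ : ℝ} (hσ : 0 < σ) (x : ℝ) :
    2 / (σ * √(2 * π)) * x ^ α / (gaussAbsMoment α * σ ^ α) * exp (-x ^ 2 / (2 * σ ^ 2))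
      = (∫ x in Ioi 0, radialWeight α (1 / (2 * σ ^ 2)) x)⁻¹
        * radialWeight α (1 / (2 * σ ^ 2)) x := by
  rw [integral_radialWeight_eq_gaussAbsMoment α hσ, radialWeight,
    show -(1 / (2 * σ ^ 2)) * x ^ 2 = -x ^ 2 / (2 * σ ^ 2) by ring]
  ring

lemma nuRadial_eq_inv_smul_radialMeasure {δ σ : ℝ} {i : ℕ} (hδ : 0 < δ + 2 * i) (hσ : 0 < σ) :
    nuRadial δ i σ
      = (radialMeasure (δ - 1 + 2 * i) (1 / (2 * σ ^ 2)) univ)⁻¹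
        • radialMeasure (δ - 1 + 2 * i) (1 / (2 * σ ^ 2)) := by
  have hα : -1 < δ - 1 + 2 * (i : ℝ) := by linarith
  have hb : 0 < 1 / (2 * σ ^ 2) := by positivity
  have hZ := integral_radialWeight_pos hα hb
  rw [radialMeasure_univ hα hb, ← ENNReal.ofReal_inv_of_pos hZ, radialMeasure,
    ← withDensity_smul _ (measurable_radialWeight _ _).ennreal_ofReal,
    ← withDensity_indicator measurableSet_Ioi, nuRadial]
  congr 1 with x
  by_cases hx : 0 < x
  · rw [if_pos hx, indicator_of_mem (mem_Ioi.2 hx), nuRadial_density_eq _ hσ, Pi.smul_apply,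
      smul_eq_mul, ENNReal.ofReal_mul (inv_nonneg.2 hZ.le)]
  · rw [if_neg hx, indicator_of_notMem (mt mem_Ioi.1 hx), ENNReal.ofReal_zero]

end Normalisation

section Posterior

variable {Ω : Type*} [MeasurableSpace Ω] {ν κ : Measure Ω} {L : Ω → ENNReal} {c : ENNReal}

lemma lintegral_eq_mul_of_withDensity_eq_smul (h : ν.withDensity L = c • κ) :
    ∫⁻ x, L x ∂ν = c * κ univ := by
  rw [← setLIntegral_univ, ← withDensity_apply _ MeasurableSet.univ, h, Measure.smul_apply,
    smul_eq_mul]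

lemma withDensity_div_lintegral_of_withDensity_eq_smul (hL : Measurable L)
    (h : ν.withDensity L = c • κ) (hc₀ : c ≠ 0) (hc : c ≠ ⊤) :
    ν.withDensity (fun x => L x / ∫⁻ x, L x ∂ν) = (κ univ)⁻¹ • κ := by
  have div_eq_smul : (fun x => L x / ∫⁻ x, L x ∂ν) = (∫⁻ x, L x ∂ν)⁻¹ • L := by
    ext x
    rw [Pi.smul_apply, smul_eq_mul, div_eq_mul_inv, mul_comm]
  rw [div_eq_smul, withDensity_smul _ hL, h, lintegral_eq_mul_of_withDensity_eq_smul h, smul_smul,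
    ENNReal.mul_inv (.inl hc₀) (.inl hc), mul_right_comm, ENNReal.inv_mul_cancel hc₀ hc, one_mul]

end Posterior

section Updating

variable {δ lam σ y : ℝ} {i : ℕ}

lemma likelihood_eq_mul_radialWeight (x : ℝ) :
    2 * lam * x ^ 2 / y ^ 3 * exp (-lam * x ^ 2 / y ^ 2)
      = 2 * lam / y ^ 3 * radialWeight 2 (lam / y ^ 2) x := by
  rw [radialWeight, rpow_two, show -(lam / y ^ 2) * x ^ 2 = -lam * x ^ 2 / y ^ 2 by ring]
  ring

lemma precision_add (hlam : 0 < lam) (hσ : 0 < σ) (hy : 0 < y) :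
    1 / (2 * σ ^ 2) + lam / y ^ 2 = 1 / (2 * (σ * y / √(y ^ 2 + 2 * lam * σ ^ 2)) ^ 2) := by
  rw [div_pow, mul_pow, sq_sqrt (by positivity)]
  field_simp

lemma nuRadial_withDensity_likelihood (hδ : 0 < δ + 2 * i) (hlam : 0 < lam) (hσ : 0 < σ)
    (hy : 0 < y) :
    (nuRadial δ i σ).withDensity
        (fun x => ENNReal.ofReal (2 * lam * x ^ 2 / y ^ 3 * exp (-lam * x ^ 2 / y ^ 2)))
      = ((radialMeasure (δ - 1 + 2 * i) (1 / (2 * σ ^ 2)) univ)⁻¹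
          * ENNReal.ofReal (2 * lam / y ^ 3))
        • radialMeasure (δ - 1 + 2 * (i + 1 : ℕ))
          (1 / (2 * (σ * y / √(y ^ 2 + 2 * lam * σ ^ 2)) ^ 2)) := by
  have likelihood_eq_smul :
      (fun x => ENNReal.ofReal (2 * lam * x ^ 2 / y ^ 3 * exp (-lam * x ^ 2 / y ^ 2)))
        = ENNReal.ofReal (2 * lam / y ^ 3)
          • fun x => ENNReal.ofReal (radialWeight 2 (lam / y ^ 2) x) := by
    ext x
    rw [likelihood_eq_mul_radialWeight, ENNReal.ofReal_mul (by positivity), Pi.smul_apply,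
      smul_eq_mul]
  have exponent_add : δ - 1 + 2 * (i : ℝ) + 2 = δ - 1 + 2 * (i + 1 : ℕ) := by
    push_cast
    ring
  rw [nuRadial_eq_inv_smul_radialMeasure hδ hσ, withDensity_smul_measure, likelihood_eq_smul,
    withDensity_smul _ (measurable_radialWeight _ _).ennreal_ofReal,
    radialMeasure_withDensity_radialWeight, exponent_add, precision_add hlam hσ hy, smul_smul]

end Updating

theorem nuRadial_updating_general (δ lam σ : ℝ) (i : ℕ) (hδ : 0 < δ + 2 * i) (hlam : 0 < lam)
    (hσ : 0 < σ) (y : ℝ) (hy : 0 < y) :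
    0 < ∫⁻ x, ENNReal.ofReal (2 * lam * x ^ 2 / y ^ 3 * Real.exp (-lam * x ^ 2 / y ^ 2))
          ∂(nuRadial δ i σ) ∧
    (∫⁻ x, ENNReal.ofReal (2 * lam * x ^ 2 / y ^ 3 * Real.exp (-lam * x ^ 2 / y ^ 2))
          ∂(nuRadial δ i σ)) < ⊤ ∧
    (nuRadial δ i σ).withDensity
        (fun x => ENNReal.ofReal
            (2 * lam * x ^ 2 / y ^ 3 * Real.exp (-lam * x ^ 2 / y ^ 2))
          / ∫⁻ x, ENNReal.ofReal
              (2 * lam * x ^ 2 / y ^ 3 * Real.exp (-lam * x ^ 2 / y ^ 2))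
              ∂(nuRadial δ i σ))
      = nuRadial δ (i + 1) (σ * y / Real.sqrt (y ^ 2 + 2 * lam * σ ^ 2)) := by
  have hα : -1 < δ - 1 + 2 * (i : ℝ) := by linarith
  have hδ' : 0 < δ + 2 * (i + 1 : ℕ) := by push_cast; linarith
  have hα' : -1 < δ - 1 + 2 * ((i + 1 : ℕ) : ℝ) := by linarith
  have hb : 0 < 1 / (2 * σ ^ 2) := by positivity
  have hT : 0 < σ * y / √(y ^ 2 + 2 * lam * σ ^ 2) := by positivity
  have hb' : 0 < 1 / (2 * (σ * y / √(y ^ 2 + 2 * lam * σ ^ 2)) ^ 2) := by positivity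
  have hc : 0 < ENNReal.ofReal (2 * lam / y ^ 3) := ENNReal.ofReal_pos.2 (by positivity)
  have hc₀ := mul_ne_zero (ENNReal.inv_ne_zero.2 (radialMeasure_univ_lt_top hα hb).ne) hc.ne'
  have hc_top := ENNReal.mul_ne_top (ENNReal.inv_ne_top.2 (radialMeasure_univ_pos hα hb).ne')
    (ENNReal.ofReal_ne_top (r := 2 * lam / y ^ 3))
  have update := nuRadial_withDensity_likelihood hδ hlam hσ hy
  rw [nuRadial_eq_inv_smul_radialMeasure hδ' hT,
    withDensity_div_lintegral_of_withDensity_eq_smul (by fun_prop) update hc₀ hc_top,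
    lintegral_eq_mul_of_withDensity_eq_smul update]
  exact ⟨ENNReal.mul_pos hc₀ (radialMeasure_univ_pos hα' hb').ne',
    ENNReal.mul_lt_top hc_top.lt_top (radialMeasure_univ_lt_top hα' hb'), rfl⟩

/-- Updating operator for the observation model `y = x·w`, `w ∼ Γ^{−1/2}` with
`Γ` exponential of parameter `λ`: conditioning `ν^{i,(δ)}_σ` on `y` via the
likelihood `f_x(y) = 2λx²y^{−3} exp(−λx²/y²)` yields `ν^{i+1,(δ)}_{T_y(σ)}`
with `T_y(σ) = σy/(y² + 2λσ²)^{1/2}`. -/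
theorem nuRadial_updating (δ lam σ : ℝ) (hδ : 1 ≤ δ) (hlam : 0 < lam) (hσ : 0 < σ)
    (i : ℕ) (y : ℝ) (hy : 0 < y) :
    0 < ∫⁻ x, ENNReal.ofReal (2 * lam * x ^ 2 / y ^ 3 * Real.exp (-lam * x ^ 2 / y ^ 2))
          ∂(nuRadial δ i σ) ∧
    (∫⁻ x, ENNReal.ofReal (2 * lam * x ^ 2 / y ^ 3 * Real.exp (-lam * x ^ 2 / y ^ 2))
          ∂(nuRadial δ i σ)) < ⊤ ∧
    (nuRadial δ i σ).withDensity
        (fun x => ENNReal.ofReal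
            (2 * lam * x ^ 2 / y ^ 3 * Real.exp (-lam * x ^ 2 / y ^ 2))
          / ∫⁻ x, ENNReal.ofReal
              (2 * lam * x ^ 2 / y ^ 3 * Real.exp (-lam * x ^ 2 / y ^ 2))
              ∂(nuRadial δ i σ))
      = nuRadial δ (i + 1) (σ * y / Real.sqrt (y ^ 2 + 2 * lam * σ ^ 2)) := by
  exact nuRadial_updating_general δ lam σ i (by positivity) hlam hσ y hy
end

section
/- Let δ ≥ 1 be real, σ > 0, λ > 0, i ∈ ℕ and y ∈ ℕ. Let ρ be the Gamma distribution on (0, ∞) with shape i + δ/2 and rate 1/(2σ²) (density r ↦ (1/(2σ²))^{i+δ/2} r^{i+δ/2−1} e^{−r/(2σ²)}/Γ(i+δ/2)), and let f_r(y) = e^{−λr}(λr)^y/y! be the Poisson(λr) probability of the value y. Set p(y) = ∫_0^∞ f_r(y) dρ(r). Then 0 < p(y) < ∞ and the probability measure with density r ↦ f_r(y)/p(y) with respect to ρ is the Gamma distribution with shape y + i + δ/2 and rate λ + 1/(2σ²); equivalently, in the notation of the filtering algorithm, t_y(i) = y + i and T_y(σ) = (2λ + 1/σ²)^{−1/2}.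 -/
open MeasureTheory ProbabilityTheory

/-!
As a function of `r > 0`, the Poisson likelihood is a constant times `r ^ y * exp (-lam * r)`.
Multiplying a Gamma density by such a factor adds `y` to the shape and `lam` to the rate, up to a
constant. Normalising by the evidence removes that constant, so it is only its positivity that
matters, and the posterior is the Gamma distribution with the new parameters.
-/

section Normalization

variable {α : Type*} [MeasurableSpace α] {μ ν : Measure α} [IsProbabilityMeasure ν]
  {f : α → ENNReal} {C : ENNReal}

lemma lintegral_eq_of_withDensity_eq_smul (h : μ.withDensity f = C • ν) :
    ∫⁻ x, f x ∂μ = C := by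
  rw [← setLIntegral_univ, ← withDensity_apply f MeasurableSet.univ, h, Measure.smul_apply,
    measure_univ, smul_eq_mul, mul_one]

lemma withDensity_div_lintegral_of_withDensity_eq_smul_s19 (h : μ.withDensity f = C • ν)
    (hC₀ : C ≠ 0) (hC : C ≠ ⊤) :
    μ.withDensity (fun x ↦ f x / ∫⁻ x, f x ∂μ) = ν := by
  have hdiv : (fun x ↦ f x / C) = C⁻¹ • f := by
    ext x
    exact ENNReal.div_eq_inv_mul
  rw [lintegral_eq_of_withDensity_eq_smul h, hdiv,
    withDensity_smul' _ _ (ENNReal.inv_ne_top.mpr hC₀), h, smul_smul,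
    ENNReal.inv_mul_cancel hC₀ hC, one_smul]

end Normalization

section GammaTilting

lemma measurable_gammaPDF (a c : ℝ) : Measurable (gammaPDF a c) :=
  (measurable_gammaPDFReal a c).ennreal_ofReal

/-- The moment `E[X ^ s * exp (-b * X)]` of a Gamma variable `X` with shape `a` and rate `c`,
in closed form. It is the constant that appears when the Gamma density is tilted by
`r ^ s * exp (-b * r)`. -/
noncomputable def gammaTiltMass (a c s b : ℝ) : ℝ :=
  c ^ a / Real.Gamma a * (Real.Gamma (s + a) / (b + c) ^ (s + a))

variable {a c s b : ℝ}

lemma gammaTiltMass_pos (ha : 0 < a) (hc : 0 < c) (hsa : 0 < s + a) (hbc : 0 < b + c) :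
    0 < gammaTiltMass a c s b := by
  unfold gammaTiltMass
  have := Real.Gamma_pos_of_pos ha
  have := Real.Gamma_pos_of_pos hsa
  positivity

lemma gammaPDFReal_mul_rpow_mul_exp (hsa : 0 < s + a) (hbc : 0 < b + c) {r : ℝ} (hr : r ≠ 0) :
    gammaPDFReal a c r * (r ^ s * Real.exp (-b * r)) =
      gammaTiltMass a c s b * gammaPDFReal (s + a) (b + c) r := by
  rcases hr.lt_or_gt with hneg | hpos
  · simp only [gammaPDFReal, if_neg hneg.not_ge, zero_mul, mul_zero]
  have hpow : r ^ (s + a - 1) = r ^ s * r ^ (a - 1) := by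
    rw [add_sub_assoc, Real.rpow_add hpos]
  have hexp : Real.exp (-((b + c) * r)) = Real.exp (-b * r) * Real.exp (-(c * r)) := by
    rw [← Real.exp_add]
    ring_nf
  have hcancel : Real.Gamma (s + a) / (b + c) ^ (s + a) *
      ((b + c) ^ (s + a) / Real.Gamma (s + a)) = 1 := by
    rw [← inv_div, inv_mul_cancel₀]
    exact (div_pos (Real.rpow_pos_of_pos hbc _) (Real.Gamma_pos_of_pos hsa)).ne'
  simp only [gammaPDFReal, if_pos hpos.le, gammaTiltMass, hpow, hexp]
  linear_combination (-(c ^ a / Real.Gamma a * r ^ s * r ^ (a - 1) * Real.exp (-b * r) *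
    Real.exp (-(c * r)))) * hcancel

lemma withDensity_rpow_mul_exp_gammaMeasure (hsa : 0 < s + a) (hbc : 0 < b + c) :
    (gammaMeasure a c).withDensity (fun r ↦ ENNReal.ofReal (r ^ s * Real.exp (-b * r))) =
      ENNReal.ofReal (gammaTiltMass a c s b) • gammaMeasure (s + a) (b + c) := by
  rw [gammaMeasure, gammaMeasure, ← withDensity_mul _ (measurable_gammaPDF a c) (by fun_prop),
    ← withDensity_smul _ (measurable_gammaPDF _ _)]
  refine withDensity_congr_ae ?_
  filter_upwards [Measure.ae_ne volume (0 : ℝ)] with r hr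
  rcases hr.lt_or_gt with hneg | hpos
  · simp only [Pi.mul_apply, Pi.smul_apply, gammaPDF_of_neg hneg, zero_mul, smul_zero]
  calc gammaPDF a c r * ENNReal.ofReal (r ^ s * Real.exp (-b * r))
      = ENNReal.ofReal (gammaPDFReal a c r * (r ^ s * Real.exp (-b * r))) :=
        (ENNReal.ofReal_mul' (by positivity)).symm
    _ = ENNReal.ofReal (gammaTiltMass a c s b * gammaPDFReal (s + a) (b + c) r) := by
        rw [gammaPDFReal_mul_rpow_mul_exp hsa hbc hr]
    _ = ENNReal.ofReal (gammaTiltMass a c s b) * gammaPDF (s + a) (b + c) r :=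
        ENNReal.ofReal_mul' (gammaPDFReal_nonneg hsa hbc r)

end GammaTilting

/-- The probability that a Poisson variable with parameter `lam * r` takes the value `y`, as a
function of the signal `r`. It is a probability only for `0 ≤ lam * r`, which suffices because
Gamma distributions live on `(0, ∞)`. -/
noncomputable def poissonLikelihood (lam : ℝ) (y : ℕ) (r : ℝ) : ENNReal :=
  ENNReal.ofReal (Real.exp (-lam * r) * (lam * r) ^ y / Nat.factorial y)

lemma poissonLikelihood_eq_smul {lam : ℝ} (hlam : 0 ≤ lam) (y : ℕ) :
    poissonLikelihood lam y = ENNReal.ofReal (lam ^ y / Nat.factorial y) •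
      fun r ↦ ENNReal.ofReal (r ^ (y : ℝ) * Real.exp (-lam * r)) := by
  ext r
  rw [Pi.smul_apply, smul_eq_mul, ← ENNReal.ofReal_mul (by positivity), Real.rpow_natCast,
    poissonLikelihood]
  ring_nf

lemma withDensity_poissonLikelihood_gammaMeasure {a c lam : ℝ} (ha : 0 < a) (hc : 0 < c)
    (hlam : 0 ≤ lam) (y : ℕ) :
    (gammaMeasure a c).withDensity (poissonLikelihood lam y) =
      ENNReal.ofReal (lam ^ y / Nat.factorial y * gammaTiltMass a c y lam) •
        gammaMeasure (y + a) (lam + c) := by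
  rw [poissonLikelihood_eq_smul hlam, withDensity_smul' _ _ ENNReal.ofReal_ne_top,
    withDensity_rpow_mul_exp_gammaMeasure (by positivity) (by positivity), smul_smul,
    ← ENNReal.ofReal_mul (by positivity)]

lemma rpow_neg_one_div_two_sq {x : ℝ} (hx : 0 ≤ x) : (x ^ (-(1 : ℝ) / 2)) ^ 2 = x⁻¹ := by
  rw [← Real.rpow_mul_natCast hx, ← Real.rpow_neg_one]
  norm_num

theorem gamma_poisson_updating_general {δ σ lam : ℝ} {i : ℕ} (hshape : 0 < (i : ℝ) + δ / 2)
    (hσ : σ ≠ 0) (hlam : 0 < lam) (y : ℕ) :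
    let prior := gammaMeasure ((i : ℝ) + δ / 2) (1 / (2 * σ ^ 2))
    let evidence := ∫⁻ r, poissonLikelihood lam y r ∂prior
    0 < evidence ∧ evidence < ⊤ ∧
    prior.withDensity (fun r ↦ poissonLikelihood lam y r / evidence) =
      gammaMeasure ((y : ℝ) + i + δ / 2) (lam + 1 / (2 * σ ^ 2)) ∧
    lam + 1 / (2 * σ ^ 2) = 1 / (2 * ((2 * lam + 1 / σ ^ 2) ^ (-(1 : ℝ) / 2)) ^ 2) := by
  intro prior evidence
  have hrate : 0 < 1 / (2 * σ ^ 2) := by positivity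
  have hshape' : 0 < (y : ℝ) + (i + δ / 2) := by positivity
  have hrate' : 0 < lam + 1 / (2 * σ ^ 2) := by positivity
  have hmass := gammaTiltMass_pos hshape hrate hshape' hrate'
  have hposterior := withDensity_poissonLikelihood_gammaMeasure hshape hrate hlam.le y
  have := isProbabilityMeasure_gammaMeasure hshape' hrate'
  have hevidence : evidence = _ := lintegral_eq_of_withDensity_eq_smul hposterior
  have hevidence_pos : 0 < evidence := by
    rw [hevidence, ENNReal.ofReal_pos]
    positivity
  have hevidence_lt_top : evidence < ⊤ := hevidence ▸ ENNReal.ofReal_lt_top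
  refine ⟨hevidence_pos, hevidence_lt_top, ?_, ?_⟩
  · rw [add_assoc]
    exact withDensity_div_lintegral_of_withDensity_eq_smul_s19 hposterior
      (hevidence ▸ hevidence_pos.ne') ENNReal.ofReal_ne_top
  · rw [rpow_neg_one_div_two_sq (by positivity)]
    field_simp

/-- Updating step for conditionally Poisson observations of a
Cox–Ingersoll–Ross signal: if the prior on the signal is the Gamma
distribution with shape `i + δ/2` and rate `1/(2σ²)` and the observation `y`
is Poisson with parameter `λr` given the signal value `r`, then the posterior
is the Gamma distribution with shape `y + i + δ/2` and rate `λ + 1/(2σ²)`;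
equivalently `t_y(i) = y + i` and `T_y(σ) = (2λ + 1/σ²)^{−1/2}`. -/
theorem gamma_poisson_updating (δ σ lam : ℝ) (hδ : 1 ≤ δ) (hσ : 0 < σ)
    (hlam : 0 < lam) (i : ℕ) (y : ℕ) :
    0 < ∫⁻ r, ENNReal.ofReal
          (Real.exp (-lam * r) * (lam * r) ^ y / Nat.factorial y)
          ∂(gammaMeasure ((i : ℝ) + δ / 2) (1 / (2 * σ ^ 2))) ∧
    (∫⁻ r, ENNReal.ofReal
          (Real.exp (-lam * r) * (lam * r) ^ y / Nat.factorial y)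
          ∂(gammaMeasure ((i : ℝ) + δ / 2) (1 / (2 * σ ^ 2)))) < ⊤ ∧
    (gammaMeasure ((i : ℝ) + δ / 2) (1 / (2 * σ ^ 2))).withDensity
        (fun r => ENNReal.ofReal
            (Real.exp (-lam * r) * (lam * r) ^ y / Nat.factorial y)
          / ∫⁻ r, ENNReal.ofReal
              (Real.exp (-lam * r) * (lam * r) ^ y / Nat.factorial y)
              ∂(gammaMeasure ((i : ℝ) + δ / 2) (1 / (2 * σ ^ 2))))
      = gammaMeasure ((y : ℝ) + i + δ / 2) (lam + 1 / (2 * σ ^ 2)) ∧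
    lam + 1 / (2 * σ ^ 2)
      = 1 / (2 * ((2 * lam + 1 / σ ^ 2) ^ (-(1 : ℝ) / 2)) ^ 2) :=
  gamma_poisson_updating_general (by positivity) hσ.ne' hlam y
end
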